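/- If a signed complete graph (K_n, σ) has fewer than n/2 negative edges, then its frustration index equals its number of negative edges: |E^−(K_n, σ)| < n/2 implies l(K_n, σ) = |E^−(K_n, σ)|. -/

import Mathlib

/-- The sign of a walk in a signed graph: the product of the signs of its edges. -/
def walkSign {V : Type*} (G : SimpleGraph V) (σ : Sym2 V → ℤˣ) {u v : V}
    (w : G.Walk u v) : ℤˣ :=
  (w.edges.map σ).prod

/-- A signed graph is balanced if every circle (cycle) is positive. -/
def sgBalanced {V : Type*} (G : SimpleGraph V) (σ : Sym2 V → ℤˣ) : Prop :=
  ∀ ⦃v : V⦄ (w : G.Walk v v), w.IsCycle → walkSign G σ w = 1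

/-- The frustration index `l(Σ)`: the minimum number of edges whose deletion leaves a
balanced signed graph. -/
noncomputable def frustIndex {V : Type*} (G : SimpleGraph V) (σ : Sym2 V → ℤˣ) : ℕ :=
  sInf {k | ∃ F : Finset (Sym2 V), ↑F ⊆ G.edgeSet ∧ F.card = k ∧
    sgBalanced (G.deleteEdges ↑F) σ}

/-!
By Harary's theorem, a balanced signature has the form `uv ↦ s u * s v` for some `s : V → ℤˣ`, so
its negative edges form an edge cut. If deleting `F` leaves `Σ` balanced, the corresponding cut `C`
agrees with `E⁻(Σ)` outside `F`. When `Γ` is `2|E⁻(Σ)|`-edge-connected, either `C` is empty and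
`E⁻(Σ) ⊆ F`, or `2|E⁻(Σ)| ≤ |C| ≤ |F| + |E⁻(Σ)|`; both give `|E⁻(Σ)| ≤ |F|`. Finally, `K_n` is
`(n - 1)`-edge-connected.
-/

section

open SimpleGraph

variable {V : Type*} {G : SimpleGraph V} {σ τ : Sym2 V → ℤˣ} {s : V → ℤˣ} {u v w : V}

@[simp]
lemma walkSign_nil : walkSign G σ (.nil : G.Walk u u) = 1 := by
  simp [walkSign]

@[simp]
lemma walkSign_cons (h : G.Adj u v) (p : G.Walk v w) :
    walkSign G σ (.cons h p) = σ s(u, v) * walkSign G σ p := by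
  simp [walkSign]

@[simp]
lemma walkSign_append (p : G.Walk u v) (q : G.Walk v w) :
    walkSign G σ (p.append q) = walkSign G σ p * walkSign G σ q := by
  simp [walkSign]

@[simp]
lemma walkSign_reverse (p : G.Walk u v) : walkSign G σ p.reverse = walkSign G σ p := by
  simp [walkSign, List.prod_reverse]

@[simp]
lemma walkSign_copy {u' v' : V} (p : G.Walk u v) (hu : u = u') (hv : v = v') :
    walkSign G σ (p.copy hu hv) = walkSign G σ p := by
  simp [walkSign]

namespace sgBalanced

lemma sign_mul_walkSign_eq_one (hb : sgBalanced G σ) (h : G.Adj u v) {p : G.Walk v u}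
    (hp : p.IsPath) : σ s(u, v) * walkSign G σ p = 1 := by
  by_cases he : s(u, v) ∈ p.edges
  · rw [Sym2.eq_swap] at he ⊢
    rw [hp.eq_adj_toWalk_of_mem_edges he]
    simp [Adj.toWalk, Int.units_mul_self]
  · rw [← walkSign_cons h]
    exact hb _ ((p.cons_isCycle_iff h).2 ⟨hp, he⟩)

lemma walkSign_bypass [DecidableEq V] (hb : sgBalanced G σ) (p : G.Walk u v) :
    walkSign G σ p.bypass = walkSign G σ p := by
  induction p with
  | nil => rfl
  | @cons u w v h p ih =>
    rw [walkSign_cons, ← ih, Walk.bypass]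
    split_ifs with hu
    · have hsplit := congrArg (walkSign G σ) (p.bypass.take_spec hu)
      rw [walkSign_append] at hsplit
      rw [← hsplit, ← mul_assoc,
        hb.sign_mul_walkSign_eq_one h (p.bypass_isPath.takeUntil hu), one_mul]
    · exact walkSign_cons h _

lemma walkSign_eq_one (hb : sgBalanced G σ) (p : G.Walk u u) : walkSign G σ p = 1 := by
  classical
  rw [← hb.walkSign_bypass, (Walk.isPath_iff_nil.1 p.bypass_isPath).eq_nil, walkSign_nil]

end sgBalanced

/-- The signature `uv ↦ s u * s v` induced by a vertex labelling `s`, that is, the all-positive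
signature switched by `s`. Its negative edges in a graph form the cut between the two classes of
`s`. -/
def inducedSign (s : V → ℤˣ) (e : Sym2 V) : ℤˣ :=
  (e.map s).mul

@[simp]
lemma inducedSign_mk : inducedSign s s(u, v) = s u * s v :=
  rfl

@[simp]
lemma inducedSign_one : inducedSign (1 : V → ℤˣ) = 1 := by
  ext e
  induction e
  simp

lemma walkSign_eq_mul_of_eqOn_inducedSign (h : Set.EqOn σ (inducedSign s) G.edgeSet)
    (p : G.Walk u v) : walkSign G σ p = s u * s v := by
  induction p with
  | nil => simp [Int.units_mul_self]
  | @cons u w v huw p ih =>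
    calc walkSign G σ (.cons huw p) = s u * s w * (s w * s v) := by
          rw [walkSign_cons, ih, h huw, inducedSign_mk]
      _ = s u * s v := by rw [mul_assoc, ← mul_assoc (s w), Int.units_mul_self, one_mul]

theorem sgBalanced_iff_exists_eqOn_inducedSign :
    sgBalanced G σ ↔ ∃ s : V → ℤˣ, Set.EqOn σ (inducedSign s) G.edgeSet := by
  constructor
  · intro hb
    let root (v : V) : V := (G.connectedComponentMk v).out
    have reachable_root (v : V) : G.Reachable (root v) v :=
      ConnectedComponent.exact (Quot.out_eq _)
    let path (v : V) : G.Walk (root v) v := (reachable_root v).some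
    refine ⟨fun v ↦ walkSign G σ (path v), fun e he ↦ ?_⟩
    induction e with | _ u v
    rw [mem_edgeSet] at he
    have hroot : root u = root v :=
      congrArg Quot.out (ConnectedComponent.sound (Adj.reachable he))
    have hclosed := hb.walkSign_eq_one
      (.cons he ((path v).reverse.append ((path u).copy hroot rfl)))
    rw [walkSign_cons, walkSign_append, walkSign_reverse, walkSign_copy] at hclosed
    rw [inducedSign_mk, mul_comm (walkSign G σ (path u)), mul_eq_one_iff_eq_inv.1 hclosed,
      Int.units_inv_eq_self]
  · rintro ⟨s, hs⟩ v p -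
    rw [walkSign_eq_mul_of_eqOn_inducedSign hs, Int.units_mul_self]

/-- The set `E⁻(Σ)` of negative edges of the signed graph `Σ = (G, σ)`. -/
def negEdges (G : SimpleGraph V) (σ : Sym2 V → ℤˣ) : Set (Sym2 V) :=
  {e ∈ G.edgeSet | σ e = -1}

lemma eqOn_one_deleteEdges_negEdges : Set.EqOn σ 1 (G.deleteEdges (negEdges G σ)).edgeSet := by
  intro e he
  rw [edgeSet_deleteEdges] at he
  exact (Int.units_eq_one_or (σ e)).resolve_right fun hneg ↦ he.2 ⟨he.1, hneg⟩

lemma sgBalanced_deleteEdges_negEdges : sgBalanced (G.deleteEdges (negEdges G σ)) σ :=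
  sgBalanced_iff_exists_eqOn_inducedSign.2
    ⟨1, inducedSign_one (V := V) ▸ eqOn_one_deleteEdges_negEdges⟩

lemma negEdges_subset_union_of_eqOn {F : Set (Sym2 V)}
    (h : Set.EqOn σ τ (G.deleteEdges F).edgeSet) : negEdges G σ ⊆ F ∪ negEdges G τ := by
  rintro e ⟨heG, heσ⟩
  refine or_iff_not_imp_left.2 fun heF ↦ ⟨heG, ?_⟩
  rw [← h (edgeSet_deleteEdges F ▸ ⟨heG, heF⟩), heσ]

lemma negEdges_inducedSign_eq_empty_or_le_encard {k : ℕ} (hG : G.IsEdgeConnected k) (s : V → ℤˣ) :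
    negEdges G (inducedSign s) = ∅ ∨ k ≤ (negEdges G (inducedSign s)).encard := by
  refine or_iff_not_imp_right.2 fun hlt ↦ Set.eq_empty_of_forall_notMem fun e ⟨_, he⟩ ↦ ?_
  induction e with | _ u v
  obtain ⟨p⟩ := hG u v (not_le.1 hlt)
  have hpos := eqOn_one_deleteEdges_negEdges (G := G) (σ := inducedSign s)
  rw [← inducedSign_one] at hpos
  have hone : inducedSign s s(u, v) = 1 :=
    (walkSign_eq_mul_of_eqOn_inducedSign (Set.eqOn_refl _ _) p).symm.trans
      (walkSign_eq_mul_of_eqOn_inducedSign hpos p)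
  exact absurd (hone.symm.trans he) (by decide)

theorem encard_negEdges_le_of_sgBalanced_deleteEdges (hfin : (negEdges G σ).Finite)
    (hG : G.IsEdgeConnected (2 * (negEdges G σ).ncard)) {F : Set (Sym2 V)}
    (hF : sgBalanced (G.deleteEdges F) σ) : (negEdges G σ).encard ≤ F.encard := by
  obtain ⟨s, hs⟩ := sgBalanced_iff_exists_eqOn_inducedSign.1 hF
  rcases negEdges_inducedSign_eq_empty_or_le_encard hG s with hcut | hcut
  · refine Set.encard_le_encard ?_
    simpa [hcut] using negEdges_subset_union_of_eqOn hs
  · refine (ENat.add_le_add_iff_right hfin.encard_lt_top.ne).1 ?_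
    calc (negEdges G σ).encard + (negEdges G σ).encard
        = (2 * (negEdges G σ).ncard : ℕ) := by
          rw [← hfin.cast_ncard_eq]
          norm_cast
          ring
      _ ≤ (negEdges G (inducedSign s)).encard := hcut
      _ ≤ (F ∪ negEdges G σ).encard :=
          Set.encard_le_encard (negEdges_subset_union_of_eqOn hs.symm)
      _ ≤ F.encard + (negEdges G σ).encard := Set.encard_union_le _ _

lemma mem_of_not_reachable_deleteEdges {F : Set (Sym2 V)} (h : G.Adj u v)
    (huv : ¬(G.deleteEdges F).Reachable u v) : s(u, v) ∈ F := by
  by_contra hF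
  exact huv (Adj.reachable (deleteEdges_adj.2 ⟨h, hF⟩))

-- The paths of length at most two from `u` to `v` are edge-disjoint, and `F` meets each of them.
lemma card_le_encard_add_one_of_not_reachable_top_deleteEdges {F : Set (Sym2 V)}
    (huv : ¬((⊤ : SimpleGraph V).deleteEdges F).Reachable u v) : ENat.card V ≤ F.encard + 1 := by
  classical
  let blocked (w : V) : Sym2 V := if s(u, w) ∈ F then s(u, w) else s(w, v)
  have blocked_mem : Set.MapsTo blocked {u}ᶜ F := by
    intro w hwu
    dsimp only [blocked]
    split_ifs with huw
    · exact huw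
    · have hreach : ((⊤ : SimpleGraph V).deleteEdges F).Reachable u w :=
        not_imp_comm.1 (mem_of_not_reachable_deleteEdges (Ne.symm hwu)) huw
      have hwv : w ≠ v := fun h ↦ huv (h ▸ hreach)
      exact mem_of_not_reachable_deleteEdges hwv fun h ↦ huv (hreach.trans h)
  have blocked_injOn : Set.InjOn blocked {u}ᶜ := by
    intro w hw x hx hwx
    simp only [Set.mem_compl_iff, Set.mem_singleton_iff] at hw hx
    simp only [blocked] at hwx
    grind
  calc ENat.card V = ({u}ᶜ : Set V).encard + 1 := by
        rw [← Set.encard_univ, ← Set.encard_sdiff_singleton_add_one (Set.mem_univ u),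
          ← Set.compl_eq_univ_sdiff]
    _ ≤ F.encard + 1 := by
        gcongr
        exact Set.encard_le_encard_of_injOn blocked_mem blocked_injOn

lemma isEdgeConnected_top_of_lt_card {k : ℕ} (hk : k < ENat.card V) :
    (⊤ : SimpleGraph V).IsEdgeConnected k := by
  intro u v F hF
  by_contra huv
  have hcard := card_le_encard_add_one_of_not_reachable_top_deleteEdges huv
  exact (hk.trans_le (hcard.trans (Order.add_one_le_of_lt hF))).false

theorem frustIndex_eq_negEdges_of_few_general (hfin : (negEdges G σ).Finite)
    (hG : G.IsEdgeConnected (2 * (negEdges G σ).ncard)) :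
    frustIndex G σ = (negEdges G σ).ncard := by
  refine IsLeast.csInf_eq ⟨⟨hfin.toFinset, ?_, ?_, ?_⟩, ?_⟩
  · exact hfin.coe_toFinset.trans_subset (Set.sep_subset _ _)
  · rw [Set.ncard_eq_toFinset_card _ hfin]
  · simpa using sgBalanced_deleteEdges_negEdges
  · rintro _ ⟨F, -, rfl, hF⟩
    have hle := encard_negEdges_le_of_sgBalanced_deleteEdges hfin hG hF
    rw [← hfin.cast_ncard_eq, Set.encard_coe_eq_coe_finsetCard] at hle
    exact_mod_cast hle

end

/-- If a signed complete graph `(K_n, σ)` has fewer than `n/2` negative edges, then its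
frustration index equals its number of negative edges. -/
theorem frustIndex_eq_negEdges_of_few (n : ℕ) (σ : Sym2 (Fin n) → ℤˣ)
    (h : 2 * ((⊤ : SimpleGraph (Fin n)).edgeFinset.filter fun e => σ e = -1).card < n) :
    frustIndex (⊤ : SimpleGraph (Fin n)) σ =
      ((⊤ : SimpleGraph (Fin n)).edgeFinset.filter fun e => σ e = -1).card := by
  have hneg : negEdges ⊤ σ = ((⊤ : SimpleGraph (Fin n)).edgeFinset.filter fun e => σ e = -1) := by
    ext e
    simp [negEdges]
  rw [← Set.ncard_coe_finset, ← hneg] at h ⊢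
  exact frustIndex_eq_negEdges_of_few_general (Set.toFinite _)
    (isEdgeConnected_top_of_lt_card <| by
      rw [ENat.card_eq_coe_fintype_card, Fintype.card_fin]
      exact_mod_cast h)
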